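/- Assume in addition that B has finite flat dimension as a right A-module. Then for every B-module V (viewed as an A-module annihilated by I) one has Tor_n^A(B, V) = 0 for all n ≥ 1, and the natural map B ⊗_A V → V is an isomorphism; equivalently, the functor i^* := B ⊗^L_A − : D^b(A-Mod) → D^b(B-Mod) is left adjoint to the restriction-of-scalars functor i_* and i^* ∘ i_* is naturally isomorphic to the identity functor of D^b(B-Mod). -/

import Mathlib

universe u

open CategoryTheory Abelian

noncomputable instance moduleCatHasDerivedCategory (R : Type u) [Ring R] :
    HasDerivedCategory (ModuleCat.{u} R) :=
  HasDerivedCategory.standard _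

section RestrictScalars

variable {R₁ R₂ : Type u} [Ring R₁] [Ring R₂] (f : R₁ →+* R₂)

instance : (ModuleCat.restrictScalars.{u} f).Additive := ⟨rfl⟩

noncomputable instance : Limits.PreservesFiniteLimits (ModuleCat.restrictScalars.{u} f) :=
  ⟨fun _ _ _ => ⟨fun {F} => ModuleCat.preservesLimit_restrictScalars f F⟩⟩

noncomputable instance : Limits.PreservesFiniteColimits (ModuleCat.restrictScalars.{u} f) :=
  ⟨fun _ _ _ => ⟨fun {F} => ModuleCat.preservesColimit_restrictScalars f F⟩⟩

end RestrictScalars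
/-- A cochain complex is bounded if its components vanish outside a finite
range of degrees. -/
def IsBoundedComplex {C : Type*} [Category C] [Limits.HasZeroMorphisms C]
    (K : CochainComplex C ℤ) : Prop :=
  ∃ a b : ℤ, ∀ i : ℤ, (i < a ∨ b < i) → Limits.IsZero (K.X i)

/-- The bounded derived category `D^b(C)`, realized as the full subcategory of
the derived category of `C` consisting of objects which are isomorphic to the
image of a bounded complex. -/
def BoundedDerivedCategory (C : Type*) [Category C] [Abelian C]
    [HasDerivedCategory C] :=
  ObjectProperty.FullSubcategory (fun Z : DerivedCategory C =>
    ∃ K : CochainComplex C ℤ, IsBoundedComplex K ∧ Nonempty (Z ≅ DerivedCategory.Q.obj K))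

noncomputable instance (C : Type*) [Category C] [Abelian C] [HasDerivedCategory C] :
    Category (BoundedDerivedCategory C) :=
  inferInstanceAs (Category (ObjectProperty.FullSubcategory _))

/-- The inclusion `D^b(C) ⥤ D(C)`. -/
noncomputable def boundedInclusion (C : Type*) [Category C] [Abelian C]
    [HasDerivedCategory C] : BoundedDerivedCategory C ⥤ DerivedCategory C :=
  ObjectProperty.ι _

section TorFunctor

variable {A B : Type u} [Ring A] [Ring B] (π : A →+* B)
  (hπ : Function.Surjective π)

/-- The submodule `(ker π)·V` of an `A`-module `V`. -/
def kerSMul (V : Type u) [AddCommGroup V] [Module A V] : Submodule A V :=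
  Submodule.span A {z : V | ∃ r ∈ RingHom.ker π, ∃ v : V, z = r • v}

/-- The action of `B` on `V / (ker π)·V`, via an arbitrary choice of lifts. -/
noncomputable def quotSMul (V : Type u) [AddCommGroup V] [Module A V] :
    SMul B (V ⧸ kerSMul π V) :=
  ⟨fun b x => Function.surjInv hπ b • x⟩

lemma quotSMul_proj (V : Type u) [AddCommGroup V] [Module A V] (a : A)
    (x : V ⧸ kerSMul π V) :
    (letI := quotSMul π hπ V; π a • x) = a • x := by
  obtain ⟨v, rfl⟩ := Submodule.Quotient.mk_surjective _ x
  have key : Function.surjInv hπ (π a) • (Submodule.Quotient.mk v : V ⧸ kerSMul π V) =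
      a • Submodule.Quotient.mk v := by
    set c := Function.surjInv hπ (π a) with hc
    have hca : π c = π a := Function.surjInv_eq hπ _
    rw [← sub_eq_zero, ← Submodule.Quotient.mk_smul, ← Submodule.Quotient.mk_smul,
      ← Submodule.Quotient.mk_sub, ← sub_smul, Submodule.Quotient.mk_eq_zero]
    exact Submodule.subset_span ⟨c - a, by simp [RingHom.mem_ker, hca], v, rfl⟩
  exact key

/-- `V / (ker π)·V` is a `B`-module. -/
noncomputable def quotModule (V : Type u) [AddCommGroup V] [Module A V] :
    Module B (V ⧸ kerSMul π V) :=
  letI := quotSMul π hπ V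
  Function.Surjective.moduleLeft π hπ (quotSMul_proj π hπ V)

lemma quotModule_proj_smul (V : Type u) [AddCommGroup V] [Module A V] (a : A)
    (x : V ⧸ kerSMul π V) :
    (letI := quotModule π hπ V; π a • x) = a • x :=
  quotSMul_proj π hπ V a x

end TorFunctor

section TorFunctor2

variable {A B : Type u} [Ring A] [Ring B] (π : A →+* B)
  (hπ : Function.Surjective π)

lemma kerSMul_le_comap {V W : ModuleCat.{u} A} (φ : V ⟶ W) :
    kerSMul π V ≤ (kerSMul π W).comap φ.hom := by
  rw [kerSMul, Submodule.span_le]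
  rintro z ⟨r, hr, v, rfl⟩
  simp only [SetLike.mem_coe, Submodule.mem_comap, map_smul]
  exact Submodule.subset_span ⟨r, hr, φ v, rfl⟩

/-- The functor `V ↦ V / (ker π)·V = B ⊗_A V` from `A`-modules to `B`-modules;
its left derived functors compute `Tor^A_n(B, -)`. -/
noncomputable def torQuotFunctor : ModuleCat.{u} A ⥤ ModuleCat.{u} B where
  obj V :=
    letI := quotModule π hπ (V : Type u)
    ModuleCat.of B ((V : Type u) ⧸ kerSMul π (V : Type u))
  map {V W} φ :=
    letI := quotModule π hπ (V : Type u)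
    letI := quotModule π hπ (W : Type u)
    ModuleCat.ofHom
    { toFun := Submodule.mapQ (kerSMul π V) (kerSMul π W) φ.hom (kerSMul_le_comap π φ)
      map_add' := by intro x y; exact map_add _ x y
      map_smul' := by
        intro b x
        obtain ⟨a, rfl⟩ := hπ b
        simp only [RingHom.id_apply]
        rw [quotModule_proj_smul π hπ, quotModule_proj_smul π hπ, map_smul] }
  map_id V := by
    refine ModuleCat.hom_ext (DFunLike.ext _ _ fun x => ?_)
    obtain ⟨v, rfl⟩ := Submodule.Quotient.mk_surjective _ x
    rfl
  map_comp {U V W} φ ψ := by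
    refine ModuleCat.hom_ext (DFunLike.ext _ _ fun x => ?_)
    obtain ⟨v, rfl⟩ := Submodule.Quotient.mk_surjective _ x
    rfl

instance : (torQuotFunctor π hπ).Additive where
  map_add := by
    intro V W φ ψ
    refine ModuleCat.hom_ext (DFunLike.ext _ _ fun x => ?_)
    obtain ⟨v, rfl⟩ := Submodule.Quotient.mk_surjective _ x
    rfl

end TorFunctor2

/-- The quotient ring `B = A / I`. -/
def QuotByIdeal (A : Type u) [Ring A] (I : Ideal A) : Type u :=
  RingQuot (fun a b : A => a ∈ I ∧ b = 0)

noncomputable instance (A : Type u) [Ring A] (I : Ideal A) : Ring (QuotByIdeal A I) :=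
  inferInstanceAs (Ring (RingQuot _))

/-- The quotient map `A → B = A / I`. -/
noncomputable def quotByIdealProj (A : Type u) [Ring A] (I : Ideal A) :
    A →+* QuotByIdeal A I :=
  RingQuot.mkRingHom _

lemma quotByIdealProj_surjective (A : Type u) [Ring A] (I : Ideal A) :
    Function.Surjective (quotByIdealProj A I) :=
  RingQuot.mkRingHom_surjective _

section Counit

variable (A : Type u) [Ring A] (I : Ideal A)

lemma kerSMul_le_ker_id (V : ModuleCat.{u} (QuotByIdeal A I)) :
    kerSMul (quotByIdealProj A I)
        ((ModuleCat.restrictScalars (quotByIdealProj A I)).obj V) ≤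
      LinearMap.ker (LinearMap.id :
        (ModuleCat.restrictScalars (quotByIdealProj A I)).obj V →ₗ[A]
          (ModuleCat.restrictScalars (quotByIdealProj A I)).obj V) := by
  rw [kerSMul, Submodule.span_le]
  rintro z ⟨r, hr, v, rfl⟩
  simp only [SetLike.mem_coe, LinearMap.mem_ker, LinearMap.id_apply]
  show (r • v : V) = 0
  have : (r • v : V) = quotByIdealProj A I r • (v : V) := rfl
  rw [this, RingHom.mem_ker.1 hr, zero_smul]

/-- The natural map `B ⊗_A V → V` for a `B`-module `V`. -/
noncomputable def counitMap (V : ModuleCat.{u} (QuotByIdeal A I)) :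
    (torQuotFunctor (quotByIdealProj A I) (quotByIdealProj_surjective A I)).obj
        ((ModuleCat.restrictScalars (quotByIdealProj A I)).obj V) ⟶ V :=
  letI := quotModule (quotByIdealProj A I) (quotByIdealProj_surjective A I)
    ((ModuleCat.restrictScalars (quotByIdealProj A I)).obj V : Type u)
  ModuleCat.ofHom
  { toFun := Submodule.liftQ _ LinearMap.id (kerSMul_le_ker_id A I V)
    map_add' := by intro x y; exact map_add _ x y
    map_smul' := by
      intro b x
      obtain ⟨a, rfl⟩ := quotByIdealProj_surjective A I b
      obtain ⟨v, rfl⟩ := Submodule.Quotient.mk_surjective _ x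
      simp only [RingHom.id_apply]
      rw [quotModule_proj_smul (quotByIdealProj A I) (quotByIdealProj_surjective A I)]
      rw [← Submodule.Quotient.mk_smul]
      show (Submodule.liftQ _ LinearMap.id (kerSMul_le_ker_id A I V))
          (Submodule.Quotient.mk (a • v)) =
        quotByIdealProj A I a •
          (Submodule.liftQ _ LinearMap.id (kerSMul_le_ker_id A I V))
            (Submodule.Quotient.mk v)
      rw [Submodule.liftQ_apply, Submodule.liftQ_apply]
      rfl }

end Counit


namespace TorAdj

open CategoryTheory Limits Pretriangulated

section Univ

universe v₁ v₂ u₁ u₂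

variable {T₁ : Type u₁} {T₂ : Type u₂} [Category.{v₁} T₁] [Category.{v₂} T₂] (R : T₂ ⥤ T₁)

/-- `f : X ⟶ R Y` is universal with respect to the object `W`. -/
def UnivAt {X : T₁} {Y : T₂} (f : X ⟶ R.obj Y) (W : T₂) : Prop :=
  Function.Bijective (fun g : Y ⟶ W => f ≫ R.map g)

lemma UnivAt.of_iso {X : T₁} {Y : T₂} {f : X ⟶ R.obj Y} {W W' : T₂} (e : W ≅ W')
    (h : UnivAt R f W) : UnivAt R f W' := by
  constructor
  · intro g g' hg
    have : g ≫ e.inv = g' ≫ e.inv := h.1 (by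
      dsimp at hg ⊢
      simp only [R.map_comp, reassoc_of% hg])
    simpa using this
  · intro x
    obtain ⟨g, hg⟩ := h.2 (x ≫ R.map e.inv)
    refine ⟨g ≫ e.hom, ?_⟩
    dsimp at hg ⊢
    rw [R.map_comp, reassoc_of% hg, ← R.map_comp, e.inv_hom_id, R.map_id, Category.comp_id]

end Univ

section Tri

universe v₁ v₂ u₁ u₂

variable {T₁ : Type u₁} {T₂ : Type u₂} [Category.{v₁} T₁] [Category.{v₂} T₂]
  [HasZeroObject T₁] [HasZeroObject T₂] [HasShift T₁ ℤ] [HasShift T₂ ℤ]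
  [Preadditive T₁] [Preadditive T₂]
  [∀ n : ℤ, (shiftFunctor T₁ n).Additive] [∀ n : ℤ, (shiftFunctor T₂ n).Additive]
  [Pretriangulated T₁] [Pretriangulated T₂]
  (R : T₂ ⥤ T₁) [R.CommShift ℤ] [R.IsTriangulated]

/-- The connecting morphism of a triangle, shifted. -/
def delta (T : Triangle T₂) : T.obj₃⟦(-1 : ℤ)⟧ ⟶ T.obj₁ := T.invRotate.mor₁

lemma delta_comp (T : Triangle T₂) (hT : T ∈ distTriang T₂) : delta T ≫ T.mor₁ = 0 :=
  comp_distTriang_mor_zero₁₂ _ (inv_rot_of_distTriang _ hT)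

lemma R_exact₁ (T : Triangle T₂) (hT : T ∈ distTriang T₂) {X : T₁} (x : X ⟶ R.obj T.obj₁)
    (hx : x ≫ R.map T.mor₁ = 0) :
    ∃ z : X ⟶ R.obj (T.obj₃⟦(-1 : ℤ)⟧), x = z ≫ R.map (delta T) :=
  (R.mapTriangle.obj T.invRotate).coyoneda_exact₂
    (R.map_distinguished _ (inv_rot_of_distTriang _ hT)) x hx

lemma R_exact₂ (T : Triangle T₂) (hT : T ∈ distTriang T₂) {X : T₁} (x : X ⟶ R.obj T.obj₂)
    (hx : x ≫ R.map T.mor₂ = 0) :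
    ∃ z : X ⟶ R.obj T.obj₁, x = z ≫ R.map T.mor₁ :=
  (R.mapTriangle.obj T).coyoneda_exact₂ (R.map_distinguished _ hT) x hx

lemma yon_exact₁ (T : Triangle T₂) (hT : T ∈ distTriang T₂) {W : T₂} (y : T.obj₁ ⟶ W)
    (hy : T.mor₃ ≫ y⟦(1 : ℤ)⟧' = 0) : ∃ z : T.obj₂ ⟶ W, y = T.mor₁ ≫ z := by
  obtain ⟨g, hg⟩ : ∃ g : T.obj₂⟦(1 : ℤ)⟧ ⟶ W⟦(1 : ℤ)⟧, y⟦(1 : ℤ)⟧' = (-T.mor₁⟦(1 : ℤ)⟧') ≫ g :=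
    T.rotate.yoneda_exact₃ (rot_of_distTriang _ hT) (y⟦(1 : ℤ)⟧') hy
  obtain ⟨z, rfl⟩ := (shiftFunctor T₂ (1 : ℤ)).map_surjective g
  refine ⟨-z, (shiftFunctor T₂ (1 : ℤ)).map_injective ?_⟩
  rw [hg]
  simp

/-- extension closure in the target variable -/
lemma UnivAt.ext_target {X : T₁} {Y : T₂} {f : X ⟶ R.obj Y} (T : Triangle T₂)
    (hT : T ∈ distTriang T₂) (h₁ : UnivAt R f T.obj₁) (h₃ : UnivAt R f T.obj₃)
    (h₀ : UnivAt R f (T.obj₃⟦(-1 : ℤ)⟧)) (h₄ : UnivAt R f (T.obj₁⟦(1 : ℤ)⟧)) :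
    UnivAt R f T.obj₂ := by
  constructor
  · intro g g' hg
    rw [← sub_eq_zero]
    dsimp at hg
    generalize hy : g - g' = y
    replace hg : f ≫ R.map y = 0 := by
      rw [← hy, R.map_sub, Preadditive.comp_sub, hg, sub_self]
    have e1 : y ≫ T.mor₂ = 0 := h₃.1 (by
      dsimp
      rw [R.map_comp, reassoc_of% hg, R.map_zero, zero_comp, comp_zero])
    obtain ⟨z, rfl⟩ := T.coyoneda_exact₂ hT y e1
    obtain ⟨w, hw⟩ := R_exact₁ R T hT (f ≫ R.map z) (by
      rw [Category.assoc, ← R.map_comp, hg])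
    obtain ⟨w', rfl⟩ := h₀.2 w
    have : z = w' ≫ delta T := h₁.1 (by
      dsimp at hw ⊢
      rw [hw, Category.assoc, ← R.map_comp])
    rw [this, Category.assoc, delta_comp T hT, comp_zero]
  · intro x
    obtain ⟨y₃, hy₃⟩ := h₃.2 (x ≫ R.map T.mor₂)
    dsimp at hy₃
    have e1 : y₃ ≫ T.mor₃ = 0 := h₄.1 (by
      dsimp
      rw [R.map_comp, reassoc_of% hy₃, ← R.map_comp, comp_distTriang_mor_zero₂₃ _ hT]
      simp)
    obtain ⟨y₂, rfl⟩ := T.coyoneda_exact₃ hT y₃ e1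
    obtain ⟨z, hz⟩ := R_exact₂ R T hT (x - f ≫ R.map y₂) (by
      rw [Preadditive.sub_comp, ← hy₃]
      simp)
    obtain ⟨z', rfl⟩ := h₁.2 z
    refine ⟨y₂ + z' ≫ T.mor₁, ?_⟩
    dsimp at hz ⊢
    rw [R.map_add, Preadditive.comp_add, R.map_comp, ← Category.assoc f (R.map z'), ← hz]
    abel

/-- the shift of a universal morphism -/
def shiftMor {X : T₁} {Y : T₂} (f : X ⟶ R.obj Y) (n : ℤ) : X⟦n⟧ ⟶ R.obj (Y⟦n⟧) :=
  f⟦n⟧' ≫ (R.commShiftIso n).inv.app Y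

lemma UnivAt.shift {X : T₁} {Y : T₂} {f : X ⟶ R.obj Y} {W : T₂} (n : ℤ)
    (h : UnivAt R f (W⟦-n⟧)) : UnivAt R (shiftMor R f n) W := by
  suffices UnivAt R (shiftMor R f n) (W⟦-n⟧⟦n⟧) from
    UnivAt.of_iso R ((shiftEquiv T₂ n).counitIso.app W) this
  have key : (fun g : Y⟦n⟧ ⟶ W⟦-n⟧⟦n⟧ => shiftMor R f n ≫ R.map g) ∘
      (fun g : Y ⟶ W⟦-n⟧ => g⟦n⟧') =
      (fun g => g ≫ (R.commShiftIso n).inv.app (W⟦-n⟧)) ∘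
      (fun g : X ⟶ R.obj (W⟦-n⟧) => g⟦n⟧') ∘ (fun g : Y ⟶ W⟦-n⟧ => f ≫ R.map g) := by
    ext g
    simp [shiftMor]
  have b1 : Function.Bijective (fun g : Y ⟶ W⟦-n⟧ => (g⟦n⟧' : Y⟦n⟧ ⟶ _)) :=
    ⟨(shiftFunctor T₂ n).map_injective, (shiftFunctor T₂ n).map_surjective⟩
  have b2 : Function.Bijective (fun g : X ⟶ R.obj (W⟦-n⟧) => (g⟦n⟧' : X⟦n⟧ ⟶ _)) :=
    ⟨(shiftFunctor T₁ n).map_injective, (shiftFunctor T₁ n).map_surjective⟩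
  have b3 : Function.Bijective (fun g : X⟦n⟧ ⟶ (R.obj (W⟦-n⟧))⟦n⟧ =>
      g ≫ (R.commShiftIso n).inv.app (W⟦-n⟧)) :=
    ⟨fun a b hab => (cancel_mono ((R.commShiftIso n).inv.app (W⟦-n⟧))).1 hab,
      fun a => ⟨a ≫ (R.commShiftIso n).hom.app _, by simp⟩⟩
  unfold UnivAt
  rw [← Function.Bijective.of_comp_iff _ b1, key]
  exact b3.comp (b2.comp h)

/-- extension closure in the source variable -/
lemma UnivAt.ext_source (S : Triangle T₁) (hS : S ∈ distTriang T₁) (T : Triangle T₂)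
    (hT : T ∈ distTriang T₂) (f₁ : S.obj₁ ⟶ R.obj T.obj₁) (f₂ : S.obj₂ ⟶ R.obj T.obj₂)
    (f₃ : S.obj₃ ⟶ R.obj T.obj₃) (c₁ : S.mor₁ ≫ f₂ = f₁ ≫ R.map T.mor₁)
    (c₂ : S.mor₂ ≫ f₃ = f₂ ≫ R.map T.mor₂)
    (c₃ : S.mor₃ ≫ shiftMor R f₁ 1 = f₃ ≫ R.map T.mor₃) (W : T₂)
    (h₁ : ∀ n : ℤ, UnivAt R f₁ (W⟦n⟧)) (h₃ : ∀ n : ℤ, UnivAt R f₃ (W⟦n⟧)) :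
    UnivAt R f₂ W := by
  have h₁₀ : UnivAt R f₁ W :=
    (h₁ 0).of_iso R ((shiftFunctorZero T₂ ℤ).app W)
  have h₃₀ : UnivAt R f₃ W :=
    (h₃ 0).of_iso R ((shiftFunctorZero T₂ ℤ).app W)
  have h₁' := (h₁ (-1)).shift R
  constructor
  · intro g g' hg
    rw [← sub_eq_zero]
    dsimp at hg
    generalize hy : g - g' = y
    replace hg : f₂ ≫ R.map y = 0 := by
      rw [← hy, R.map_sub, Preadditive.comp_sub, hg, sub_self]
    have e1 : T.mor₁ ≫ y = 0 := h₁₀.1 (by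
      dsimp
      rw [R.map_comp, ← reassoc_of% c₁, hg, R.map_zero, comp_zero, comp_zero])
    obtain ⟨z, rfl⟩ := T.yoneda_exact₂ hT y e1
    obtain ⟨w, hw⟩ := S.yoneda_exact₃ hS (f₃ ≫ R.map z) (by
      rw [reassoc_of% c₂, ← R.map_comp, hg])
    obtain ⟨w', rfl⟩ := h₁'.2 w
    have : z = T.mor₃ ≫ w' := h₃₀.1 (by
      dsimp at hw ⊢
      rw [hw, R.map_comp, reassoc_of% c₃])
    rw [this, ← Category.assoc, comp_distTriang_mor_zero₂₃ _ hT, zero_comp]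
  · intro x
    obtain ⟨y₁, hy₁⟩ := h₁₀.2 (S.mor₁ ≫ x)
    dsimp at hy₁
    have e1 : T.mor₃ ≫ y₁⟦(1 : ℤ)⟧' = 0 := (h₃ 1).1 (by
      dsimp
      rw [R.map_comp, ← reassoc_of% c₃]
      simp only [shiftMor, Category.assoc, R.map_zero, comp_zero]
      rw [← R.commShiftIso_inv_naturality, ← Functor.map_comp_assoc, hy₁, Functor.map_comp_assoc,
        comp_distTriang_mor_zero₃₁_assoc _ hS, zero_comp])
    obtain ⟨y₂, hy₂⟩ := yon_exact₁ T hT y₁ e1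
    obtain ⟨z, hz⟩ := S.yoneda_exact₂ hS (x - f₂ ≫ R.map y₂) (by
      rw [Preadditive.comp_sub, ← hy₁, hy₂, reassoc_of% c₁, R.map_comp, sub_self])
    obtain ⟨z', rfl⟩ := h₃₀.2 z
    refine ⟨y₂ + T.mor₂ ≫ z', ?_⟩
    dsimp at hz ⊢
    rw [reassoc_of% c₂, ← R.map_comp] at hz
    rw [R.map_add, Preadditive.comp_add, ← hz]
    abel

end Tri
end TorAdj


namespace TorAdj

open CategoryTheory Limits Pretriangulated DerivedCategory

section Bdd

universe w v u'

variable {C : Type u'} [Category.{v} C] [Abelian C] [HasDerivedCategory.{w} C]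

/-- cohomologically bounded objects -/
def Bdd (X : DerivedCategory C) : Prop := ∃ a b : ℤ, X.IsGE a ∧ X.IsLE b

lemma Bdd.of_iso {X Y : DerivedCategory C} (e : X ≅ Y) (h : Bdd X) : Bdd Y := by
  obtain ⟨a, b, h₁, h₂⟩ := h
  exact ⟨a, b, TStructure.t.isGE_of_iso e a, TStructure.t.isLE_of_iso e b⟩

lemma Bdd.shift {X : DerivedCategory C} (h : Bdd X) (n : ℤ) : Bdd (X⟦n⟧) := by
  obtain ⟨a, b, h₁, h₂⟩ := h
  exact ⟨a - n, b - n, TStructure.t.isGE_shift X a n (a - n), TStructure.t.isLE_shift X b n (b - n)⟩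

lemma Bdd.ext₂ (T : Triangle (DerivedCategory C)) (hT : T ∈ distTriang _)
    (h₁ : Bdd T.obj₁) (h₃ : Bdd T.obj₃) : Bdd T.obj₂ := by
  obtain ⟨a, b, h₁, h₂⟩ := h₁
  obtain ⟨a', b', h₁', h₂'⟩ := h₃
  exact ⟨min a a', max b b',
    TStructure.t.isGE₂ T hT _ (TStructure.t.isGE_of_ge _ _ a (min_le_left _ _))
      (TStructure.t.isGE_of_ge _ _ a' (min_le_right _ _)),
    TStructure.t.isLE₂ T hT _ (TStructure.t.isLE_of_le _ b _ (le_max_left _ _))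
      (TStructure.t.isLE_of_le _ b' _ (le_max_right _ _))⟩

lemma Bdd.single (M : C) (n : ℤ) : Bdd ((singleFunctor C n).obj M) :=
  ⟨n, n, inferInstance, inferInstance⟩

lemma bdd_iff (X : DerivedCategory C) :
    Bdd X ↔ ∃ K : CochainComplex C ℤ, IsBoundedComplex K ∧ Nonempty (X ≅ Q.obj K) := by
  constructor
  · rintro ⟨a, b, h₁, h₂⟩
    obtain ⟨K, hK₁, hK₂, ⟨e⟩⟩ := exists_iso_Q_obj_of_isGE_of_isLE X a b
    refine ⟨K, ⟨a, b, ?_⟩, ⟨e⟩⟩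
    rintro i (hi | hi)
    · exact K.isZero_of_isStrictlyGE a i hi
    · exact K.isZero_of_isStrictlyLE b i hi
  · rintro ⟨K, ⟨a, b, h⟩, ⟨e⟩⟩
    refine Bdd.of_iso e.symm ⟨a, b, ?_, ?_⟩
    · have : K.IsStrictlyGE a := by
        rw [CochainComplex.isStrictlyGE_iff]
        exact fun i hi => h i (Or.inl hi)
      infer_instance
    · have : K.IsStrictlyLE b := by
        rw [CochainComplex.isStrictlyLE_iff]
        exact fun i hi => h i (Or.inr hi)
      infer_instance

lemma bdd_induction (P : DerivedCategory C → Prop)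
    (hiso : ∀ {X Y : DerivedCategory C} (_ : X ≅ Y), P X → P Y)
    (hshift : ∀ (X : DerivedCategory C) (n : ℤ), P X → P (X⟦n⟧))
    (hext : ∀ T : Triangle (DerivedCategory C), T ∈ distTriang _ → P T.obj₁ → P T.obj₃ → P T.obj₂)
    (hsingle : ∀ M : C, P ((singleFunctor C 0).obj M)) (X : DerivedCategory C) (hX : Bdd X) :
    P X := by
  have hs : ∀ (M : C) (n : ℤ), P ((singleFunctor C n).obj M) := by
    intro M n
    refine hiso ?_ (hshift _ (-n) (hsingle M))
    exact ((singleFunctors C).shiftIso (-n) n 0 (by lia)).app M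
  have key : ∀ (k : ℕ) (a : ℤ) (X : DerivedCategory C), X.IsGE a → X.IsLE (a + k) → P X := by
    intro k
    induction k with
    | zero =>
      intro a X h₁ h₂
      rw [Nat.cast_zero, add_zero] at h₂
      obtain ⟨Y, ⟨e⟩⟩ := exists_iso_singleFunctor_obj_of_isGE_of_isLE X a
      exact hiso e.symm (hs _ _)
    | succ k ih =>
      intro a X h₁ h₂
      refine hext _ (TStructure.t.triangleLEGT_distinguished a X) ?_ ?_
      · have e1 : (TStructure.t (C := C)).IsGE ((TStructure.t.truncLE a).obj X) a := inferInstance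
        have e2 : (TStructure.t (C := C)).IsLE ((TStructure.t.truncLE a).obj X) a := inferInstance
        obtain ⟨Y, ⟨e⟩⟩ :=
          exists_iso_singleFunctor_obj_of_isGE_of_isLE ((TStructure.t.truncLE a).obj X) a
        exact hiso e.symm (hs _ _)
      · apply ih (a + 1) ((TStructure.t.truncGT a).obj X)
        · exact TStructure.t.isGE_truncGT_obj X a (a + 1)
        · have : (TStructure.t (C := C)).IsLE X (a + 1 + k) := by
            convert h₂ using 1
            push_cast
            ring
          infer_instance
  obtain ⟨a, b, h₁, h₂⟩ := hX
  by_cases hab : a ≤ b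
  · obtain ⟨k, rfl⟩ := Int.le.dest hab
    exact key k a X h₁ h₂
  · exact key 0 a X h₁ (TStructure.t.isLE_of_le _ b _ (by lia))

end Bdd
end TorAdj


namespace TorAdj

open CategoryTheory Limits Abelian

section ExtPart

set_option linter.unusedSectionVars false

universe w w' v v' u₁ u₂

variable {C : Type u₁} [Category.{v} C] [Abelian C] {D : Type u₂} [Category.{v'} D] [Abelian D]
  [HasExt.{w} C] [HasExt.{w'} D]
  {F : C ⥤ D} {G : D ⥤ C} (adj : F ⊣ G)
  [G.Additive] [PreservesFiniteLimits G] [PreservesFiniteColimits G]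

/-- Dual formulation of `Tor_n(B, M) = 0` for all `n > d`. -/
def TorBound (G : D ⥤ C) (d : ℕ) (M : C) : Prop :=
  ∀ (J : D) [Injective J] (n : ℕ), d < n → Subsingleton (Ext.{w} M (G.obj J) n)

/-- the comparison map on `Ext` -/
noncomputable def extMap (M : C) (N : D) (n : ℕ) :
    Ext.{w'} (F.obj M) N n →+ Ext.{w} M (G.obj N) n :=
  ((Ext.mk₀ (adj.unit.app M)).precomp (G.obj N) (zero_add n)).comp (G.mapExtAddHom (F.obj M) N n)

lemma extMap_apply (M : C) (N : D) (n : ℕ) (e : Ext.{w'} (F.obj M) N n) :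
    extMap.{w} adj M N n e = (Ext.mk₀ (adj.unit.app M)).comp (e.mapExactFunctor G) (zero_add n) :=
  rfl

lemma extMap_mk₀ (M : C) (N : D) (g : F.obj M ⟶ N) :
    extMap.{w, w'} adj M N 0 (Ext.mk₀ g) = Ext.mk₀ (adj.homEquiv _ _ g) := by
  rw [extMap_apply, Ext.mapExactFunctor_mk₀, Ext.mk₀_comp_mk₀, adj.homEquiv_unit]

lemma extMap_precomp {M M' : C} (f : M ⟶ M') (N : D) (n : ℕ) (e : Ext.{w'} (F.obj M') N n) :
    extMap.{w} adj M N n ((Ext.mk₀ (F.map f)).comp e (zero_add n)) =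
      (Ext.mk₀ f).comp (extMap.{w} adj M' N n e) (zero_add n) := by
  have := adj.unit.naturality f
  dsimp at this
  simp only [extMap_apply, Ext.mapExactFunctor_comp, Ext.mapExactFunctor_mk₀]
  rw [Ext.mk₀_comp_mk₀_assoc, Ext.mk₀_comp_mk₀_assoc, this]

lemma extMap_extClass_aux {S : ShortComplex C} (hS : S.ShortExact) {S' : ShortComplex D}
    (hS' : S'.ShortExact) (τ₁ : S.X₁ ⟶ G.obj S'.X₁) (τ₂ : S.X₂ ⟶ G.obj S'.X₂)
    (τ₃ : S.X₃ ⟶ G.obj S'.X₃) (c₁ : τ₁ ≫ G.map S'.f = S.f ≫ τ₂)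
    (c₂ : τ₂ ≫ G.map S'.g = S.g ≫ τ₃) (N : D) (n : ℕ) (e : Ext.{w'} S'.X₁ N n) :
    (Ext.mk₀ τ₃).comp ((hS'.extClass.comp e (add_comm 1 n)).mapExactFunctor G) (zero_add _) =
      hS.extClass.comp ((Ext.mk₀ τ₁).comp (Ext.mapExactFunctor.{w', w} G e) (zero_add n))
        (add_comm 1 n) := by
  let φ : S ⟶ S'.map G :=
    { τ₁ := τ₁
      τ₂ := τ₂
      τ₃ := τ₃
      comm₁₂ := c₁
      comm₂₃ := c₂ }
  have this := ShortComplex.ShortExact.extClass_naturality hS (hS'.map_of_exact G) φ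
  have h : hS.extClass.comp (Ext.mk₀ τ₁) (add_zero 1) =
      (Ext.mk₀ τ₃).comp (Ext.mapExactFunctor.{w', w} G hS'.extClass) (zero_add 1) := by
    rw [Ext.mapExactFunctor_extClass]
    exact this
  rw [Ext.mapExactFunctor_comp]
  rw [← Ext.comp_assoc (a₁₂ := 1) (a₂₃ := n) _ _ _ (by lia) (by lia) (by lia),
    ← Ext.comp_assoc (a₁₂ := 1) (a₂₃ := n + 1) _ _ _ (by lia) (by lia) (by lia), h]

lemma extMap_extClass {S : ShortComplex C} (hS : S.ShortExact) [F.PreservesZeroMorphisms]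
    (hS' : (S.map F).ShortExact) (N : D) (n : ℕ) (e : Ext.{w'} (F.obj S.X₁) N n) :
    extMap.{w} adj S.X₃ N (n + 1) (hS'.extClass.comp e (add_comm 1 n)) =
      hS.extClass.comp (extMap.{w} adj S.X₁ N n e) (add_comm 1 n) :=
  extMap_extClass_aux hS hS' (adj.unit.app _) (adj.unit.app _) (adj.unit.app _)
    (adj.unit.naturality S.f).symm (adj.unit.naturality S.g).symm N n e

variable {adj} in
lemma TorBound.of_projective (P : C) [Projective P] (d : ℕ) : TorBound.{w} G d P := by
  intro J _ n hn
  obtain ⟨m, rfl⟩ : ∃ m, n = m + 1 := ⟨n - 1, by lia⟩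
  exact Ext.subsingleton_of_projective _ _ _

lemma TorBound.kernel {S : ShortComplex C} (hS : S.ShortExact) [Projective S.X₂] {d : ℕ}
    (h : TorBound.{w} G (d + 1) S.X₃) : TorBound.{w} G d S.X₁ := by
  intro J _ n hn
  refine ⟨fun x y => ?_⟩
  rw [← sub_eq_zero]
  generalize x - y = z
  have : Subsingleton (Ext.{w} S.X₃ (G.obj J) (n + 1)) := h J (n + 1) (by lia)
  have hP : Subsingleton (Ext.{w} S.X₂ (G.obj J) n) :=
    TorBound.of_projective (G := G) S.X₂ 0 J n (by lia)
  obtain ⟨t, rfl⟩ := Ext.contravariant_sequence_exact₁ hS _ z (add_comm 1 n)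
    (Subsingleton.elim _ _)
  rw [Subsingleton.elim t 0, Ext.comp_zero]

lemma TorBound.mono {M : C} {d d' : ℕ} (h : d ≤ d') (hM : TorBound.{w} G d M) :
    TorBound.{w} G d' M := fun J _ n hn => hM J n (by lia)

lemma shortExact_map (adj : F ⊣ G) {S : ShortComplex C} (hS : S.ShortExact) [F.PreservesZeroMorphisms]
    [EnoughInjectives D] (h : TorBound.{w} G 0 S.X₃) : (S.map F).ShortExact := by
  have := adj.leftAdjoint_preservesColimits
  have hm : Mono (F.map S.f) := by
    let j := Injective.ι (F.obj S.X₁)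
    have : Subsingleton (Ext.{w} S.X₃ (G.obj (Injective.under (F.obj S.X₁))) 1) :=
      h _ 1 (by lia)
    obtain ⟨x, hx⟩ := Ext.contravariant_sequence_exact₁ hS _
      (Ext.mk₀ (adj.homEquiv _ _ j)) (add_comm 1 0) (Subsingleton.elim _ _)
    obtain ⟨y, rfl⟩ := (Ext.mk₀_bijective _ _).2 x
    obtain ⟨z, rfl⟩ := (adj.homEquiv _ _).surjective y
    rw [Ext.mk₀_comp_mk₀] at hx
    have hx' := (Ext.mk₀_bijective _ _).1 hx
    rw [← adj.homEquiv_naturality_left] at hx'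
    have hx'' := (adj.homEquiv _ _).injective hx'
    have : Mono (F.map S.f ≫ z) := by rw [hx'']; infer_instance
    exact mono_of_mono _ z
  have := hS.epi_g
  have he : Epi (F.map S.g) := inferInstance
  have hex : (S.map F).Exact := by
    have hc := ShortComplex.Exact.gIsCokernel hS.exact
    have : PreservesColimit (parallelPair S.f 0) F := inferInstance
    exact ShortComplex.exact_of_g_is_cokernel _
      (isColimitCoforkMapOfIsColimit' F S.zero hc)
  exact { exact := hex, mono_f := hm, epi_g := he }

lemma extMap_bijective [F.PreservesZeroMorphisms] [EnoughProjectives C] [EnoughInjectives D]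
    (n : ℕ) (M : C) (hM : TorBound.{w} G 0 M) (N : D) :
    Function.Bijective (extMap.{w, w'} adj M N n) := by
  induction n generalizing M with
  | zero =>
    have : ⇑(extMap.{w, w'} adj M N 0) ∘ Ext.mk₀ = Ext.mk₀ ∘ adj.homEquiv M N := by
      ext g
      exact extMap_mk₀ adj M N g
    rw [← Function.Bijective.of_comp_iff _ (Ext.mk₀_bijective _ _), this]
    exact (Ext.mk₀_bijective _ _).comp (adj.homEquiv M N).bijective
  | succ n hn =>
    let P : ProjectivePresentation M := Classical.arbitrary _
    let S := ShortComplex.mk _ _ (kernel.condition P.f)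
    have hS : S.ShortExact := { exact := ShortComplex.exact_kernel P.f }
    have hS' := shortExact_map adj hS hM
    have : Projective S.X₂ := P.projective
    have : Projective (S.map F).X₂ := by
      have : G.PreservesEpimorphisms := inferInstance
      exact adj.map_projective S.X₂ inferInstance
    have hK : TorBound.{w} G 0 S.X₁ := TorBound.kernel hS (hM.mono (by lia))
    have hP : TorBound.{w} G 0 S.X₂ := TorBound.of_projective _ _
    have s1 : Subsingleton (Ext.{w} S.X₂ (G.obj N) (n + 1)) :=
      Ext.subsingleton_of_projective _ _ _
    have s2 : Subsingleton (Ext.{w'} (S.map F).X₂ N (n + 1)) :=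
      Ext.subsingleton_of_projective _ _ _
    constructor
    · rw [injective_iff_map_eq_zero]
      intro e he
      obtain ⟨y, rfl⟩ := Ext.contravariant_sequence_exact₃ hS' _ e (Subsingleton.elim _ _)
        (add_comm 1 n)
      have he' : hS.extClass.comp (extMap.{w} adj S.X₁ N n y) (add_comm 1 n) = 0 :=
        (extMap_extClass adj hS hS' N n y).symm.trans he
      obtain ⟨z, hz⟩ := Ext.contravariant_sequence_exact₁ hS _ _ (add_comm 1 n) he'
      obtain ⟨z, rfl⟩ := (hn S.X₂ hP).2 z
      have hz' := (hn S.X₁ hK).1 ((extMap_precomp adj S.f N n z).trans hz)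
      obtain rfl : _ = y := hz'
      exact hS'.extClass_comp_assoc z
    · intro x
      obtain ⟨y, rfl⟩ := Ext.contravariant_sequence_exact₃ hS _ x (Subsingleton.elim _ _)
        (add_comm 1 n)
      obtain ⟨y, rfl⟩ := (hn S.X₁ hK).2 y
      exact ⟨hS'.extClass.comp y (add_comm 1 n), extMap_extClass adj hS hS' N n y⟩

end ExtPart
end TorAdj


namespace TorAdj

open CategoryTheory Limits Abelian Pretriangulated Triangulated DerivedCategory

section DerPart

set_option linter.unusedSectionVars false

universe w w' t t' v v' u₁ u₂

variable {C : Type u₁} [Category.{v} C] [Abelian C] {D : Type u₂} [Category.{v'} D] [Abelian D]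
  [HasDerivedCategory.{t} C] [HasDerivedCategory.{t'} D]
  [HasExt.{w} C] [HasExt.{w'} D]
  {F : C ⥤ D} {G : D ⥤ C} (adj : F ⊣ G)
  [G.Additive] [PreservesFiniteLimits G] [PreservesFiniteColimits G]

/-- the unit on objects concentrated in degree `0` -/
noncomputable def unitSingle (M : C) :
    (singleFunctor C 0).obj M ⟶ G.mapDerivedCategory.obj ((singleFunctor D 0).obj (F.obj M)) :=
  (singleFunctor C 0).map (adj.unit.app M) ≫ (G.mapDerivedCategorySingleFunctor 0).inv.app (F.obj M)

/-- shifting commutes with `R` on singles -/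
noncomputable def RsingleIso (G : D ⥤ C) [G.Additive] [PreservesFiniteLimits G]
    [PreservesFiniteColimits G] (N : D) (n : ℤ) :
    G.mapDerivedCategory.obj (((singleFunctor D 0).obj N)⟦n⟧) ≅
      ((singleFunctor C 0).obj (G.obj N))⟦n⟧ :=
  (G.mapDerivedCategory.commShiftIso n).app _ ≪≫
    (shiftFunctor _ n).mapIso ((G.mapDerivedCategorySingleFunctor 0).app N)

lemma extMap_hom (M : C) (N : D) (n : ℕ) (e : Ext.{w'} (F.obj M) N n) :
    (extMap.{w} adj M N n e).hom =
      (unitSingle adj M ≫ G.mapDerivedCategory.map e.hom) ≫ (RsingleIso G N n).hom := by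
  rw [extMap_apply, Ext.comp_hom, Ext.mk₀_hom, ShiftedHom.mk₀_comp, Ext.mapExactFunctor_hom]
  simp only [unitSingle, RsingleIso, ShiftedHom.map, Iso.trans_hom, Iso.app_hom,
    Functor.mapIso_hom, Category.assoc]

lemma unitSingle_univAt_nat [F.PreservesZeroMorphisms] [EnoughProjectives C] [EnoughInjectives D]
    (M : C) (hM : TorBound.{w} G 0 M) (N : D) (n : ℕ) :
    UnivAt G.mapDerivedCategory (unitSingle adj M) (((singleFunctor D 0).obj N)⟦(n : ℤ)⟧) := by
  have key : (fun h => h ≫ (RsingleIso G N n).hom) ∘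
      (fun g => unitSingle adj M ≫ G.mapDerivedCategory.map g) ∘
        (fun e : Ext.{w'} (F.obj M) N n => e.hom) =
      (fun e : Ext.{w} M (G.obj N) n => e.hom) ∘ extMap.{w, w'} adj M N n := by
    ext e
    exact (extMap_hom adj M N n e).symm
  have h1 : Function.Bijective (fun h : (singleFunctor C 0).obj M ⟶ _ =>
      h ≫ (RsingleIso G N n).hom) :=
    ((RsingleIso G N n).homToEquiv).bijective
  have h2 : Function.Bijective (fun e : Ext.{w'} (F.obj M) N n => e.hom) :=
    Ext.homEquiv.bijective
  have h3 : Function.Bijective (fun e : Ext.{w} M (G.obj N) n => e.hom) :=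
    Ext.homEquiv.bijective
  have h4 := h3.comp (extMap_bijective.{w, w'} adj n M hM N)
  rw [← key, Function.Bijective.of_comp_iff' h1, Function.Bijective.of_comp_iff _ h2] at h4
  exact h4

lemma unitSingle_univAt_int [F.PreservesZeroMorphisms] [EnoughProjectives C] [EnoughInjectives D]
    (M : C) (hM : TorBound.{w} G 0 M) (N : D) (n : ℤ) :
    UnivAt G.mapDerivedCategory (unitSingle adj M) (((singleFunctor D 0).obj N)⟦n⟧) := by
  by_cases hn : 0 ≤ n
  · lift n to ℕ using hn
    exact unitSingle_univAt_nat.{w, w'} adj M hM N n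
  · have h1 : TStructure.t.IsGE (((singleFunctor D 0).obj N)⟦n⟧) (-n) :=
      TStructure.t.isGE_shift _ 0 n (-n)
    have h2 : TStructure.t.IsGE (((singleFunctor C 0).obj (G.obj N))⟦n⟧) (-n) :=
      TStructure.t.isGE_shift _ 0 n (-n)
    have h3 : TStructure.t.IsGE
      (G.mapDerivedCategory.obj (((singleFunctor D 0).obj N)⟦n⟧)) (-n) :=
      TStructure.t.isGE_of_iso (RsingleIso G N n).symm (-n)
    have z1 : ∀ f : (singleFunctor D 0).obj (F.obj M) ⟶ ((singleFunctor D 0).obj N)⟦n⟧, f = 0 :=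
      fun f => TStructure.t.zero_of_isLE_of_isGE f 0 (-n) (by lia) inferInstance h1
    have z2 : ∀ f : (singleFunctor C 0).obj M ⟶
        G.mapDerivedCategory.obj (((singleFunctor D 0).obj N)⟦n⟧), f = 0 :=
      fun f => TStructure.t.zero_of_isLE_of_isGE f 0 (-n) (by lia) inferInstance h3
    exact ⟨fun a b _ => (z1 a).trans (z1 b).symm, fun b => ⟨0, (z2 _).trans (z2 _).symm⟩⟩

/-- universality with respect to all shifts of singles propagates to bounded objects -/
lemma univAt_bdd {X : DerivedCategory C} {Y : DerivedCategory D}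
    (f : X ⟶ G.mapDerivedCategory.obj Y)
    (h : ∀ (N : D) (n : ℤ), UnivAt G.mapDerivedCategory f (((singleFunctor D 0).obj N)⟦n⟧))
    (W : DerivedCategory D) (hW : Bdd W) : UnivAt G.mapDerivedCategory f W := by
  suffices ∀ n : ℤ, UnivAt G.mapDerivedCategory f (W⟦n⟧) from
    UnivAt.of_iso _ ((shiftFunctorZero _ ℤ).app W) (this 0)
  refine bdd_induction (fun W => ∀ n : ℤ, UnivAt G.mapDerivedCategory f (W⟦n⟧))
    ?_ ?_ ?_ ?_ W hW
  · intro X Y e hX n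
    exact UnivAt.of_iso _ ((shiftFunctor _ n).mapIso e) (hX n)
  · intro X m hX n
    exact UnivAt.of_iso _ ((shiftFunctorAdd _ m n).app X) (hX (m + n))
  · intro T hT h₁ h₃ n
    exact UnivAt.ext_target _ _ (Triangle.shift_distinguished T hT n) (h₁ n) (h₃ n)
      (UnivAt.of_iso _ ((shiftFunctorAdd _ n (-1)).app T.obj₃) (h₃ (n + -1)))
      (UnivAt.of_iso _ ((shiftFunctorAdd _ n 1).app T.obj₁) (h₁ (n + 1)))
  · exact h

/-- `X` has a universal arrow to the bounded derived category -/
def HasUniv (G : D ⥤ C) [G.Additive] [PreservesFiniteLimits G] [PreservesFiniteColimits G]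
    (X : DerivedCategory C) : Prop :=
  ∃ (Y : DerivedCategory D) (f : X ⟶ G.mapDerivedCategory.obj Y), Bdd Y ∧
    ∀ W, Bdd W → UnivAt G.mapDerivedCategory f W

lemma HasUniv.of_iso {X X' : DerivedCategory C} (e : X ≅ X') (h : HasUniv G X) :
    HasUniv G X' := by
  obtain ⟨Y, f, hY, hf⟩ := h
  refine ⟨Y, e.inv ≫ f, hY, fun W hW => ?_⟩
  have h1 : Function.Bijective (fun h : X ⟶ G.mapDerivedCategory.obj W => e.inv ≫ h) :=
    ((e.homFromEquiv)).bijective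
  have := h1.comp (hf W hW)
  have e1 : ((fun h : X ⟶ G.mapDerivedCategory.obj W => e.inv ≫ h) ∘
    fun g ↦ f ≫ G.mapDerivedCategory.map g) = fun g ↦ (e.inv ≫ f) ≫ G.mapDerivedCategory.map g := by
    ext g
    simp
  rw [e1] at this
  exact this

lemma HasUniv.shift (X : DerivedCategory C) (n : ℤ) (h : HasUniv G X) : HasUniv G (X⟦n⟧) := by
  obtain ⟨Y, f, hY, hf⟩ := h
  exact ⟨Y⟦n⟧, shiftMor _ f n, hY.shift n, fun W hW => UnivAt.shift _ n (hf _ (hW.shift _))⟩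

lemma HasUniv.ext₂ (S : Triangle (DerivedCategory C)) (hS : S ∈ distTriang _)
    (h₁ : HasUniv G S.obj₁) (h₃ : HasUniv G S.obj₃) : HasUniv G S.obj₂ := by
  obtain ⟨Y₁, f₁, hY₁, hf₁⟩ := h₁
  obtain ⟨Y₃, f₃, hY₃, hf₃⟩ := h₃
  obtain ⟨k, hk⟩ := (hf₃ _ (hY₁.shift 1)).2 (S.mor₃ ≫ shiftMor _ f₁ 1)
  obtain ⟨Y₂, a, b, hT⟩ := distinguished_cocone_triangle₂ k
  have hRT := G.mapDerivedCategory.map_distinguished _ hT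
  obtain ⟨f₂, c₁, c₂⟩ : ∃ f₂ : S.obj₂ ⟶ G.mapDerivedCategory.obj Y₂,
      S.mor₁ ≫ f₂ = f₁ ≫ G.mapDerivedCategory.map a ∧
      S.mor₂ ≫ f₃ = f₂ ≫ G.mapDerivedCategory.map b := by
    refine complete_distinguished_triangle_morphism₂ S _ hS hRT f₁ f₃ ?_
    have hk' : f₃ ≫ G.mapDerivedCategory.map k ≫
        (G.mapDerivedCategory.commShiftIso (1 : ℤ)).hom.app Y₁ = S.mor₃ ≫ f₁⟦(1 : ℤ)⟧' := by
      have hk : f₃ ≫ G.mapDerivedCategory.map k = S.mor₃ ≫ shiftMor _ f₁ 1 := hk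
      rw [reassoc_of% hk]
      simp [shiftMor]
    exact hk'.symm
  refine ⟨Y₂, f₂, Bdd.ext₂ _ hT hY₁ hY₃, fun W hW => ?_⟩
  exact UnivAt.ext_source _ S hS _ hT f₁ f₂ f₃ c₁ c₂ hk.symm W (fun n => hf₁ _ (hW.shift n))
    (fun n => hf₃ _ (hW.shift n))

lemma HasUniv.single [F.PreservesZeroMorphisms] [EnoughProjectives C] [EnoughInjectives D]
    (adj : F ⊣ G) (d : ℕ) (M : C) (hM : TorBound.{w} G d M) :
    HasUniv G ((singleFunctor C 0).obj M) := by
  induction d generalizing M with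
  | zero =>
    exact ⟨_, unitSingle adj M, Bdd.single _ _,
      univAt_bdd _ (unitSingle_univAt_int.{w, w'} adj M hM)⟩
  | succ d hd =>
    let P : ProjectivePresentation M := Classical.arbitrary _
    let S := ShortComplex.mk _ _ (kernel.condition P.f)
    have hS : S.ShortExact := { exact := ShortComplex.exact_kernel P.f }
    have : Projective S.X₂ := P.projective
    have hK : TorBound.{w} G d S.X₁ := TorBound.kernel hS hM
    have hP : TorBound.{w} G d S.X₂ := TorBound.of_projective _ _
    exact HasUniv.ext₂ hS.singleTriangle.rotate
      (rot_of_distTriang _ hS.singleTriangle_distinguished) (hd _ hP)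
      (HasUniv.shift _ 1 (hd _ hK))

lemma HasUniv.bdd [F.PreservesZeroMorphisms] [EnoughProjectives C] [EnoughInjectives D]
    (adj : F ⊣ G) (d : ℕ) (h : ∀ M, TorBound.{w} G d M) (X : DerivedCategory C) (hX : Bdd X) :
    HasUniv G X :=
  bdd_induction (HasUniv G) HasUniv.of_iso HasUniv.shift HasUniv.ext₂
    (fun M => HasUniv.single.{w, w'} adj d M (h M)) X hX

/-- fully faithfulness on bounded objects -/
lemma univAt_id_bdd [F.PreservesZeroMorphisms] [EnoughProjectives C] [EnoughInjectives D]
    (adj : F ⊣ G) [G.Full] [G.Faithful] (h : ∀ V : D, TorBound.{w} G 0 (G.obj V))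
    (Y : DerivedCategory D) (hY : Bdd Y) :
    ∀ W, Bdd W → UnivAt G.mapDerivedCategory (𝟙 (G.mapDerivedCategory.obj Y)) W := by
  refine bdd_induction (fun Y => ∀ W, Bdd W →
    UnivAt G.mapDerivedCategory (𝟙 (G.mapDerivedCategory.obj Y)) W) ?_ ?_ ?_ ?_ Y hY
  · intro X Y e hX W hW
    constructor
    · intro a b hab
      rw [← cancel_epi e.hom]
      apply (hX W hW).1
      simp only [Category.id_comp, Functor.map_comp] at hab ⊢
      rw [hab]
    · intro b
      obtain ⟨c, hc⟩ := (hX W hW).2 (G.mapDerivedCategory.map e.hom ≫ b)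
      refine ⟨e.inv ≫ c, ?_⟩
      simp only [Category.id_comp, Functor.map_comp] at hc ⊢
      rw [hc, ← Functor.map_comp_assoc]
      simp
  · intro X n hX W hW
    have h1 := UnivAt.shift _ n (hX _ (hW.shift (-n)))
    constructor
    · intro a b hab
      apply h1.1
      simp only [Category.id_comp] at hab ⊢
      rw [hab]
    · intro b
      obtain ⟨c, hc⟩ := h1.2 ((G.mapDerivedCategory.commShiftIso n).inv.app X ≫ b)
      refine ⟨c, ?_⟩
      simpa [shiftMor] using hc
  · intro T hT h₁ h₃ W hW
    refine UnivAt.ext_source _ _ (G.mapDerivedCategory.map_distinguished _ hT) T hT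
      (𝟙 _) (𝟙 _) (𝟙 _) ?_ ?_ ?_ W (fun n => h₁ _ (hW.shift n)) (fun n => h₃ _ (hW.shift n))
    · exact (Category.comp_id _).trans (Category.id_comp _).symm
    · exact (Category.comp_id _).trans (Category.id_comp _).symm
    · have : (G.mapDerivedCategory.map T.mor₃ ≫
        (G.mapDerivedCategory.commShiftIso (1 : ℤ)).hom.app T.obj₁) ≫
          shiftMor G.mapDerivedCategory (𝟙 (G.mapDerivedCategory.obj T.obj₁)) 1 =
          𝟙 _ ≫ G.mapDerivedCategory.map T.mor₃ := by
        simp [shiftMor]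
      exact this
  · intro V W hW
    have hu := univAt_bdd _ (unitSingle_univAt_int.{w, w'} adj (G.obj V) (h V)) W hW
    -- the unit followed by the counit is an isomorphism
    let g := (singleFunctor D 0).map (adj.counit.app V)
    let u := unitSingle adj (G.obj V)
    let s := unitSingle adj (G.obj V) ≫ G.mapDerivedCategory.map g
    have hs : s = (G.mapDerivedCategorySingleFunctor 0).inv.app V := by
      have := (G.mapDerivedCategorySingleFunctor 0).inv.naturality (adj.counit.app V)
      dsimp only [Functor.comp_map, Functor.comp_obj] at this
      dsimp only [s, unitSingle, g]
      rw [Category.assoc, ← this, ← Functor.map_comp_assoc, adj.right_triangle_components]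
      simp
    have : IsIso s := by rw [hs]; infer_instance
    have : IsIso g := inferInstance
    constructor
    · intro a b hab
      rw [← cancel_epi g]
      apply hu.1
      simp only [Category.id_comp, Functor.map_comp] at hab ⊢
      rw [hab]
    · intro b
      obtain ⟨c, hc⟩ := hu.2 (s ≫ b)
      refine ⟨inv g ≫ c, ?_⟩
      rw [← cancel_epi s, ← hc]
      simp [s]

lemma bdd_R (Y : DerivedCategory D) (hY : Bdd Y) : Bdd (G.mapDerivedCategory.obj Y) := by
  refine bdd_induction (fun Y => Bdd (G.mapDerivedCategory.obj Y)) ?_ ?_ ?_ ?_ Y hY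
  · intro X Y e hX
    exact hX.of_iso (G.mapDerivedCategory.mapIso e)
  · intro X n hX
    exact (hX.shift n).of_iso ((G.mapDerivedCategory.commShiftIso n).app X).symm
  · intro T hT h₁ h₃
    exact Bdd.ext₂ _ (G.mapDerivedCategory.map_distinguished _ hT) h₁ h₃
  · intro V
    exact (Bdd.single (G.obj V) 0).of_iso ((G.mapDerivedCategorySingleFunctor 0).app V).symm

end DerPart
end TorAdj


namespace TorAdj

open CategoryTheory Limits Abelian Pretriangulated Triangulated DerivedCategory

section BddAdj

set_option linter.unusedSectionVars false

universe w w' t t' v v' u₁ u₂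

variable {C : Type u₁} [Category.{v} C] [Abelian C] {D : Type u₂} [Category.{v'} D] [Abelian D]
  [HasDerivedCategory.{t} C] [HasDerivedCategory.{t'} D]
  [HasExt.{w} C] [HasExt.{w'} D]
  {F : C ⥤ D} {G : D ⥤ C}
  [G.Additive] [PreservesFiniteLimits G] [PreservesFiniteColimits G]

lemma bounded_adjunction [F.PreservesZeroMorphisms] [EnoughProjectives C] [EnoughInjectives D]
    (adj : F ⊣ G) [G.Full] [G.Faithful] (h : ∀ V : D, TorBound.{w} G 0 (G.obj V))
    (d : ℕ) (hd : ∀ M, TorBound.{w} G d M) :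
    ∃ ist : BoundedDerivedCategory D ⥤ BoundedDerivedCategory C,
      Nonempty ((ist ⋙ boundedInclusion C) ≅ (boundedInclusion D ⋙ G.mapDerivedCategory)) ∧
      ∃ (istar : BoundedDerivedCategory C ⥤ BoundedDerivedCategory D)
        (_ : istar ⊣ ist), Nonempty ((ist ⋙ istar) ≅ 𝟭 _) := by
  let PC : ObjectProperty (DerivedCategory C) := fun Z =>
    ∃ K : CochainComplex C ℤ, IsBoundedComplex K ∧ Nonempty (Z ≅ DerivedCategory.Q.obj K)
  let PD : ObjectProperty (DerivedCategory D) := fun Z =>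
    ∃ K : CochainComplex D ℤ, IsBoundedComplex K ∧ Nonempty (Z ≅ DerivedCategory.Q.obj K)
  have hPD : ∀ Y, PD Y ↔ Bdd Y := fun Y => (bdd_iff Y).symm
  have hPC : ∀ Y, PC Y ↔ Bdd Y := fun Y => (bdd_iff Y).symm
  let ist : PD.FullSubcategory ⥤ PC.FullSubcategory :=
    PC.lift (PD.ι ⋙ G.mapDerivedCategory)
      (fun Y => (hPC _).2 (bdd_R _ ((hPD _).1 Y.property)))
  have ff : ∀ X Y : PD.FullSubcategory, Function.Bijective
      (fun g : X ⟶ Y => ist.map g) := by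
    intro X Y
    have h1 := univAt_id_bdd.{w, w'} adj h X.obj ((hPD _).1 X.property) Y.obj
      ((hPD _).1 Y.property)
    constructor
    · intro a b hab
      apply ObjectProperty.hom_ext
      apply h1.1
      have : G.mapDerivedCategory.map a.hom = G.mapDerivedCategory.map b.hom :=
        congrArg (fun x => x.hom) hab
      simp only [this]
    · intro b
      obtain ⟨c, hc⟩ := h1.2 b.hom
      refine ⟨ObjectProperty.homMk c, ?_⟩
      apply ObjectProperty.hom_ext
      exact (Category.id_comp _).symm.trans hc
  have : ist.Full := ⟨fun {X Y} f => (ff X Y).2 f⟩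
  have : ist.Faithful := ⟨fun {X Y} f g hfg => (ff X Y).1 hfg⟩
  have hu : ∀ X : PC.FullSubcategory, HasUniv G X.obj := fun X =>
    HasUniv.bdd.{w, w'} adj d hd X.obj ((hPC _).1 X.property)
  choose Y f hY hf using hu
  let Yo : PC.FullSubcategory → PD.FullSubcategory := fun X => ⟨Y X, (hPD _).2 (hY X)⟩
  let fo : ∀ X : PC.FullSubcategory, X ⟶ ist.obj (Yo X) := fun X =>
    ObjectProperty.homMk (f X)
  have hfo : ∀ (X : PC.FullSubcategory) (W : PD.FullSubcategory),
      Function.Bijective (fun g : Yo X ⟶ W => fo X ≫ ist.map g) := by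
    intro X W
    have h1 := hf X W.obj ((hPD _).1 W.property)
    constructor
    · intro a b hab
      apply ObjectProperty.hom_ext
      apply h1.1
      exact congrArg (fun x => x.hom) hab
    · intro b
      obtain ⟨c, hc⟩ := h1.2 b.hom
      refine ⟨ObjectProperty.homMk c, ?_⟩
      apply ObjectProperty.hom_ext
      exact hc
  let eq : ∀ (X : PC.FullSubcategory) (W : PD.FullSubcategory),
    (Yo X ⟶ W) ≃ (X ⟶ ist.obj W) := fun X W => Equiv.ofBijective _ (hfo X W)
  have he : ∀ X W W' g h, eq X W' (h ≫ g) = eq X W h ≫ ist.map g := by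
    intro X W W' g h
    simp [eq]
  let istar := Adjunction.leftAdjointOfEquiv eq he
  let adj' : istar ⊣ ist := Adjunction.adjunctionOfEquivLeft eq he
  have hc : IsIso adj'.counit := Adjunction.counit_isIso_of_R_fully_faithful adj'
  exact ⟨ist, ⟨PC.liftCompιIso _ _⟩, istar, adj', ⟨@asIso _ _ _ _ adj'.counit hc⟩⟩

end BddAdj
end TorAdj


namespace TorAdj

open CategoryTheory Limits Abelian

section Link

set_option linter.unusedSectionVars false

universe w w' v v' u₁ u₂

variable {C : Type u₁} [Category.{v} C] [Abelian C] {D : Type u₂} [Category.{v'} D] [Abelian D]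
  [HasExt.{w} C] {F : C ⥤ D} {G : D ⥤ C}

lemma exact_iff_injective [EnoughInjectives D] (S : ShortComplex D) :
    S.Exact ↔ ∀ (J : D) [Injective J] (f : S.X₂ ⟶ J), S.f ≫ f = 0 →
      ∃ g : S.X₃ ⟶ J, S.g ≫ g = f := by
  constructor
  · intro h J _ f hf
    exact ⟨h.descToInjective f hf, h.comp_descToInjective f hf⟩
  · intro h
    obtain ⟨g, hg⟩ := h (Injective.under S.opcycles) (S.pOpcycles ≫ Injective.ι _) (by simp)
    rw [ShortComplex.exact_iff_mono_fromOpcycles]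
    have : S.fromOpcycles ≫ g = Injective.ι _ := by
      rw [← cancel_epi S.pOpcycles, ← hg]
      simp
    have : Mono (S.fromOpcycles ≫ g) := by rw [this]; infer_instance
    exact mono_of_mono _ g

lemma link [EnoughInjectives D] [HasProjectiveResolutions C] [F.Additive] (adj : F ⊣ G)
    (M : C) (n : ℕ) :
    IsZero ((F.leftDerived (n + 1)).obj M) ↔
      ∀ (J : D) [Injective J], Subsingleton (Ext.{w} M (G.obj J) (n + 1)) := by
  let P := projectiveResolution M
  rw [(P.isoLeftDerivedObj F (n + 1)).isZero_iff]
  have h1 : IsZero ((HomologicalComplex.homologyFunctor D _ (n + 1)).obj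
        ((F.mapHomologicalComplex _).obj P.complex)) ↔ 
      ((ShortComplex.mk (P.complex.d (n + 2) (n + 1)) (P.complex.d (n + 1) n) 
        (P.complex.d_comp_d _ _ _)).map F).Exact := by
    refine ((HomologicalComplex.exactAt_iff_isZero_homology _ _).symm).trans ?_
    exact HomologicalComplex.exactAt_iff' _ (n + 2) (n + 1) n (by simp) (by simp)
  have hz : F.map (0 : P.complex.X (n + 2) ⟶ P.complex.X n) = 0 := F.map_zero _ _
  rw [h1, exact_iff_injective]
  refine forall_congr' fun J => forall_congr' fun _ => ?_
  have h2 : (∀ f : F.obj (P.complex.X (n + 1)) ⟶ J, F.map (P.complex.d (n + 2) (n + 1)) ≫ f = 0 →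
      ∃ g : F.obj (P.complex.X n) ⟶ J, F.map (P.complex.d (n + 1) n) ≫ g = f) ↔
      Subsingleton (Ext.{w} M (G.obj J) (n + 1)) := by
    have := adj.rightAdjoint_preservesLimits
    have : G.PreservesZeroMorphisms := inferInstance
    have hadj0 : ∀ X : C, adj.homEquiv X J 0 = 0 := fun X => by simp [adj.homEquiv_unit]
    constructor
    · intro h
      have : ∀ x : Ext.{w} M (G.obj J) (n + 1), x = 0 := by
        intro x
        obtain ⟨f, hf, rfl⟩ := P.extMk_surjective x (n + 2) rfl
        rw [P.extMk_eq_zero_iff f (n + 2) rfl hf n rfl]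
        obtain ⟨f, rfl⟩ := (adj.homEquiv _ _).surjective f
        rw [← adj.homEquiv_naturality_left, ← hadj0] at hf
        obtain ⟨g, rfl⟩ := h f ((adj.homEquiv _ _).injective hf)
        exact ⟨adj.homEquiv _ _ g, (adj.homEquiv_naturality_left _ _).symm⟩
      exact ⟨fun x y => (this x).trans (this y).symm⟩
    · intro h f hf
      have hf' : P.complex.d (n + 2) (n + 1) ≫ adj.homEquiv _ _ f = 0 := by
        rw [← adj.homEquiv_naturality_left, hf, hadj0]
      obtain ⟨g, hg⟩ := (P.extMk_eq_zero_iff (adj.homEquiv _ _ f) (n + 2) rfl hf' n rfl).1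
        (Subsingleton.elim _ _)
      obtain ⟨g, rfl⟩ := (adj.homEquiv _ _).surjective g
      rw [← adj.homEquiv_naturality_left] at hg
      exact ⟨g, (adj.homEquiv _ _).injective hg⟩
  exact h2

end Link
end TorAdj


namespace TorAdj

open CategoryTheory Limits Abelian

section Vanish

set_option linter.unusedSectionVars false

universe w w' v v' u₁ u₂

variable {C : Type u₁} [Category.{v} C] [Abelian C] {D : Type u₂} [Category.{v'} D] [Abelian D]
  [HasExt.{w} C] {G : D ⥤ C}
  [G.Additive] [PreservesFiniteLimits G] [PreservesFiniteColimits G]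

lemma ext_vanish_of_presentation {S : ShortComplex C} (hS : S.ShortExact) [Projective S.X₁]
    [Projective S.X₂] (Y : C) (h : ∀ f : S.X₁ ⟶ Y, f = 0) (n : ℕ) :
    Subsingleton (Ext.{w} S.X₃ Y (n + 1)) := by
  have : ∀ x : Ext.{w} S.X₃ Y (n + 1), x = 0 := by
    intro x
    have s2 : Subsingleton (Ext.{w} S.X₂ Y (n + 1)) := Ext.subsingleton_of_projective _ _ _
    obtain ⟨y, rfl⟩ := Ext.contravariant_sequence_exact₃ hS _ x (Subsingleton.elim _ _)
      (add_comm 1 n)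
    have hy : y = 0 := by
      cases n with
      | zero =>
        obtain ⟨f, rfl⟩ := (Ext.mk₀_bijective _ _).2 y
        rw [h f, Ext.mk₀_zero]
      | succ n =>
        have s2 : Subsingleton (Ext.{w} S.X₁ Y (n + 1)) := Ext.subsingleton_of_projective _ _ _
        exact Subsingleton.elim _ _
    rw [hy, Ext.comp_zero]
  exact ⟨fun x y => (this x).trans (this y).symm⟩

lemma vanish_aux {S : ShortComplex C} (hS : S.ShortExact) (Y : C) (n : ℕ)
    (h2 : Subsingleton (Ext.{w} S.X₂ Y (n + 1)))
    (h : ∀ y : Ext.{w} S.X₁ Y n, ∃ z : Ext.{w} S.X₂ Y n, 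
      (Ext.mk₀ S.f).comp z (zero_add n) = y) : Subsingleton (Ext.{w} S.X₃ Y (n + 1)) := by
  have : ∀ x : Ext.{w} S.X₃ Y (n + 1), x = 0 := by
    intro x
    obtain ⟨y, rfl⟩ := Ext.contravariant_sequence_exact₃ hS _ x (Subsingleton.elim _ _)
      (add_comm 1 n)
    obtain ⟨z, rfl⟩ := h y
    exact hS.extClass_comp_assoc z
  exact ⟨fun x y => (this x).trans (this y).symm⟩

lemma torBound_zero [G.Full] 
    (h : ∀ V : D, ∃ (Q : D) (p : Q ⟶ V), Epi p ∧ 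
      ∀ (N : D) (n : ℕ), Subsingleton (Ext.{w} (G.obj Q) (G.obj N) (n + 1)))
    (V : D) : TorBound.{w} G 0 (G.obj V) := by
  intro J _ n hn
  obtain ⟨n, rfl⟩ : ∃ m, n = m + 1 := ⟨n - 1, by lia⟩
  clear hn
  induction n generalizing V with
  | zero =>
    obtain ⟨Q, p, hp, hQ⟩ := h V
    let S := ShortComplex.mk _ _ (kernel.condition p)
    have hS : S.ShortExact := { exact := ShortComplex.exact_kernel p }
    refine vanish_aux (hS.map_of_exact G) (G.obj J) 0 (hQ J 0) ?_
    intro y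
    obtain ⟨f, rfl⟩ := (Ext.mk₀_bijective _ _).2 y
    obtain ⟨k, hk⟩ := G.map_surjective (X := kernel p) (Y := J) f
    refine ⟨Ext.mk₀ (G.map (Injective.factorThru k (kernel.ι p))), ?_⟩
    have : G.map (kernel.ι p) ≫ G.map (Injective.factorThru k (kernel.ι p)) = f := by
      rw [← G.map_comp, Injective.comp_factorThru]
      exact hk
    exact (Ext.mk₀_comp_mk₀ _ _).trans (congrArg _ this)
  | succ n hn =>
    obtain ⟨Q, p, hp, hQ⟩ := h V
    let S := ShortComplex.mk _ _ (kernel.condition p)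
    have hS : S.ShortExact := { exact := ShortComplex.exact_kernel p }
    refine vanish_aux (hS.map_of_exact G) (G.obj J) (n + 1) (hQ J (n + 1)) ?_
    intro y
    exact ⟨0, (hn (kernel p)).elim _ _⟩

end Vanish

section Concrete


open CategoryTheory

variable {A B : Type u} [Ring A] [Ring B] (π : A →+* B) (hπ : Function.Surjective π)

lemma restrictScalars_smul (V : ModuleCat.{u} B) (a : A)
    (v : (ModuleCat.restrictScalars π).obj V) :
    (a • v : (ModuleCat.restrictScalars π).obj V) = (π a • (show V from v) : V) := rfl

/-- The unit of the adjunction. -/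
noncomputable def quotUnit (M : ModuleCat.{u} A) :
    M ⟶ (ModuleCat.restrictScalars π).obj ((torQuotFunctor π hπ).obj M) :=
  letI := quotModule π hπ (M : Type u)
  ModuleCat.ofHom (Y := (ModuleCat.restrictScalars π).obj ((torQuotFunctor π hπ).obj M))
    { toFun := fun m => (Submodule.Quotient.mk m : (M : Type u) ⧸ kerSMul π (M : Type u))
      map_add' := fun _ _ => rfl
      map_smul' := fun a m => (quotModule_proj_smul π hπ M a (Submodule.Quotient.mk m)).symm }

lemma kerSMul_le_ker (M : ModuleCat.{u} A) (V : ModuleCat.{u} B)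
    (f : M ⟶ (ModuleCat.restrictScalars π).obj V) :
    kerSMul π (M : Type u) ≤ LinearMap.ker f.hom := by
  rw [kerSMul, Submodule.span_le]
  rintro z ⟨r, hr, v, rfl⟩
  simp only [SetLike.mem_coe, LinearMap.mem_ker, map_smul]
  refine (restrictScalars_smul π V r (f.hom v)).trans ?_
  rw [RingHom.mem_ker.1 hr]
  exact zero_smul B _

/-- Descent along the unit. -/
noncomputable def quotDesc (M : ModuleCat.{u} A) (V : ModuleCat.{u} B)
    (f : M ⟶ (ModuleCat.restrictScalars π).obj V) : (torQuotFunctor π hπ).obj M ⟶ V :=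
  letI := quotModule π hπ (M : Type u)
  ModuleCat.ofHom (X := (M : Type u) ⧸ kerSMul π (M : Type u))
    { toFun := Submodule.liftQ _ f.hom (kerSMul_le_ker π M V f)
      map_add' := by intro x y; exact map_add _ x y
      map_smul' := by
        intro b x
        obtain ⟨a, rfl⟩ := hπ b
        simp only [RingHom.id_apply]
        rw [quotModule_proj_smul π hπ]
        exact map_smul (Submodule.liftQ _ f.hom (kerSMul_le_ker π M V f)) a x }

/-- The hom-equivalence of the adjunction. -/
noncomputable def quotHomEquiv (M : ModuleCat.{u} A) (V : ModuleCat.{u} B) :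
    ((torQuotFunctor π hπ).obj M ⟶ V) ≃ (M ⟶ (ModuleCat.restrictScalars π).obj V) where
  toFun g := quotUnit π hπ M ≫ (ModuleCat.restrictScalars π).map g
  invFun f := quotDesc π hπ M V f
  left_inv g := by
    refine ModuleCat.hom_ext (DFunLike.ext _ _ fun x => ?_)
    obtain ⟨v, rfl⟩ := Submodule.Quotient.mk_surjective _ x
    rfl
  right_inv f := by
    refine ModuleCat.hom_ext (DFunLike.ext _ _ fun x => ?_)
    rfl

/-- The adjunction between `V ↦ V / (ker π) V` and restriction of scalars. -/
noncomputable def quotAdj : torQuotFunctor π hπ ⊣ ModuleCat.restrictScalars.{u} π :=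
  Adjunction.mkOfHomEquiv
    { homEquiv := quotHomEquiv π hπ
      homEquiv_naturality_left_symm := by
        intro X' X Y f g
        refine ModuleCat.hom_ext (DFunLike.ext _ _ fun x => ?_)
        obtain ⟨v, rfl⟩ := Submodule.Quotient.mk_surjective _ x
        rfl
      homEquiv_naturality_right := by
        intro X Y Y' f g
        rfl }

lemma restrictScalars_full (hπ : Function.Surjective π) : (ModuleCat.restrictScalars.{u} π).Full where
  map_surjective {V W} f := by
    refine ⟨ModuleCat.ofHom
      { toFun := fun v => f.hom v
        map_add' := fun x y => map_add f.hom x y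
        map_smul' := fun b x => ?_ }, ?_⟩
    · obtain ⟨a, rfl⟩ := hπ b
      exact f.hom.map_smul a (show (ModuleCat.restrictScalars π).obj V from x)
    · rfl

end Concrete
end TorAdj


namespace TorAdj

open CategoryTheory Limits Abelian

section Final


variable (A : Type u) [Ring A] (I : Ideal A)

lemma proj_eq_zero_iff (htwosided : ∀ x ∈ I, ∀ a : A, x * a ∈ I) (a : A) :
    quotByIdealProj A I a = 0 ↔ a ∈ I := by
  constructor
  · intro h
    have : I.IsTwoSided := ⟨fun {x} b hx => htwosided x hx b⟩
    let φ : QuotByIdeal A I →+* A ⧸ I := RingQuot.lift ⟨Ideal.Quotient.mk I, by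
      rintro x y ⟨hx, rfl⟩
      rw [map_zero]
      exact Ideal.Quotient.eq_zero_iff_mem.2 hx⟩
    have h1 : φ (quotByIdealProj A I a) = Ideal.Quotient.mk I a :=
      RingQuot.lift_mkRingHom_apply _ _ _
    rw [h, map_zero] at h1
    exact Ideal.Quotient.eq_zero_iff_mem.1 h1.symm
  · intro h
    have : quotByIdealProj A I a = quotByIdealProj A I 0 := RingQuot.mkRingHom_rel ⟨h, rfl⟩
    rw [this, map_zero]

/-- restriction of scalars -/
noncomputable abbrev resFun : ModuleCat.{u} (QuotByIdeal A I) ⥤ ModuleCat.{u} A :=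
  ModuleCat.restrictScalars (quotByIdealProj A I)

lemma hom_ideal_zero
    (hidem : Submodule.span A {z : A | ∃ p ∈ I, ∃ q ∈ I, z = p * q} = I)
    (htwosided : ∀ x ∈ I, ∀ a : A, x * a ∈ I)
    (N : ModuleCat.{u} (QuotByIdeal A I)) (ψ : I →ₗ[A] (resFun A I).obj N) : ψ = 0 := by
  have h : I ≤ (LinearMap.ker ψ).map I.subtype := by
    conv_lhs => rw [← hidem]
    rw [Submodule.span_le]
    rintro z ⟨p, hp, q, hq, rfl⟩
    refine ⟨p • ⟨q, hq⟩, ?_, rfl⟩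
    simp only [SetLike.mem_coe, LinearMap.mem_ker, map_smul]
    refine (restrictScalars_smul _ N p _).trans ?_
    rw [(proj_eq_zero_iff A I htwosided p).2 hp]
    exact zero_smul _ _
  ext ⟨x, hx⟩
  obtain ⟨y, hy, hyx⟩ := h hx
  have : y = ⟨x, hx⟩ := Subtype.ext hyx
  rw [← this]
  exact hy

/-- the sequence `0 → I^(X) → A^(X) → B^(X) → 0` -/
noncomputable def freeSeq (X : Type u) : ShortComplex (ModuleCat.{u} A) where
  X₁ := ModuleCat.of A (X →₀ I)
  X₂ := ModuleCat.of A (X →₀ A)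
  X₃ := (resFun A I).obj (ModuleCat.of (QuotByIdeal A I) (X →₀ QuotByIdeal A I))
  f := ModuleCat.ofHom (Finsupp.mapRange.linearMap I.subtype)
  g := ModuleCat.ofHom
    (Y := (resFun A I).obj (ModuleCat.of (QuotByIdeal A I) (X →₀ QuotByIdeal A I)))
    { toFun := fun x => (Finsupp.mapRange (quotByIdealProj A I) (map_zero _) x :
        X →₀ QuotByIdeal A I)
      map_add' := fun x y => Finsupp.mapRange_add (map_add _) x y
      map_smul' := fun a x => by
        refine (Finsupp.ext fun i => ?_ : _ = (quotByIdealProj A I a •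
          (Finsupp.mapRange (quotByIdealProj A I) (map_zero _) x) : X →₀ QuotByIdeal A I))
        simp }
  zero := by
    refine ModuleCat.hom_ext (LinearMap.ext fun x => ?_)
    refine (Finsupp.ext fun i => ?_ : _ = (0 : X →₀ QuotByIdeal A I))
    exact (RingQuot.mkRingHom_rel ⟨(x i).2, rfl⟩).trans (map_zero (quotByIdealProj A I))

lemma freeSeq_shortExact (htwosided : ∀ x ∈ I, ∀ a : A, x * a ∈ I) (X : Type u) :
    (freeSeq A I X).ShortExact := by
  classical
  refine { exact := ?_, mono_f := ?_, epi_g := ?_ }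
  · rw [ShortComplex.moduleCat_exact_iff]
    intro (x : X →₀ A) hx
    have hx' : ∀ i, (x : X →₀ A) i ∈ I := by
      intro i
      rw [← proj_eq_zero_iff A I htwosided]
      exact DFunLike.congr_fun (show Finsupp.mapRange (quotByIdealProj A I) (map_zero _)
        (x : X →₀ A) = 0 from hx) i
    refine ⟨Finsupp.mapRange (fun a : A => if h : a ∈ I then (⟨a, h⟩ : I) else 0)
      (by simp) (x : X →₀ A), ?_⟩
    refine Finsupp.ext fun i => ?_
    have : (((if h : (x : X →₀ A) i ∈ I then (⟨(x : X →₀ A) i, h⟩ : I) else 0) : I) : A) =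
      (x : X →₀ A) i := by rw [dif_pos (hx' i)]
    exact this
  · rw [ModuleCat.mono_iff_injective]
    exact Finsupp.mapRange_injective _ (map_zero _) Subtype.val_injective
  · rw [ModuleCat.epi_iff_surjective]
    exact Finsupp.mapRange_surjective _ (map_zero _) (quotByIdealProj_surjective A I)

lemma torBound_res (htwosided : ∀ x ∈ I, ∀ a : A, x * a ∈ I)
    (hidem : Submodule.span A {z : A | ∃ p ∈ I, ∃ q ∈ I, z = p * q} = I)
    (hproj : Module.Projective A ↥I) (V : ModuleCat.{u} (QuotByIdeal A I)) :
    TorBound.{u} (resFun A I) 0 ((resFun A I).obj V) := by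
  have := restrictScalars_full (quotByIdealProj A I) (quotByIdealProj_surjective A I)
  refine torBound_zero ?_ V
  intro V
  refine ⟨ModuleCat.of _ ((V : Type u) →₀ QuotByIdeal A I),
    ModuleCat.ofHom (Finsupp.linearCombination _ (id : V → V)), ?_, ?_⟩
  · rw [ModuleCat.epi_iff_surjective]
    exact Finsupp.linearCombination_id_surjective _ _
  · intro N n
    have h1 : Projective (freeSeq A I V).X₁ :=
      (IsProjective.iff_projective (R := A) (P := (V →₀ I))).1 (by
        classical
        exact Module.Projective.of_equiv (finsuppLequivDFinsupp (ι := V) (M := I) A).symm)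
    have h2 : Projective (freeSeq A I V).X₂ :=
      (IsProjective.iff_projective (R := A) (P := (V →₀ A))).1 inferInstance
    refine ext_vanish_of_presentation (freeSeq_shortExact A I htwosided V)
      ((resFun A I).obj N) ?_ n
    intro f
    refine ModuleCat.hom_ext (Finsupp.lhom_ext' fun v => ?_)
    exact hom_ideal_zero A I hidem htwosided N (f.hom.comp (Finsupp.lsingle v))

lemma counitMap_isIso (V : ModuleCat.{u} (QuotByIdeal A I)) : IsIso (counitMap A I V) := by
  rw [ConcreteCategory.isIso_iff_bijective]
  constructor
  · intro x y hxy
    obtain ⟨x, rfl⟩ := Submodule.Quotient.mk_surjective _ x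
    obtain ⟨y, rfl⟩ := Submodule.Quotient.mk_surjective _ y
    have : x = y := hxy
    rw [this]
  · intro v
    exact ⟨Submodule.Quotient.mk (show (resFun A I).obj V from v), rfl⟩

lemma main_result
    (htwosided : ∀ x ∈ I, ∀ a : A, x * a ∈ I)
    (hidem : Submodule.span A {z : A | ∃ p ∈ I, ∃ q ∈ I, z = p * q} = I)
    (hproj : Module.Projective A ↥I)
    (hflat : ∃ d : ℕ, ∀ (V : ModuleCat.{u} A) (n : ℕ), d < n →
      Limits.IsZero
        ((((torQuotFunctor (quotByIdealProj A I)
          (quotByIdealProj_surjective A I)).leftDerived n)).obj V)) :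
    (∀ (V : ModuleCat.{u} (QuotByIdeal A I)) (n : ℕ), 1 ≤ n →
      Limits.IsZero
        ((((torQuotFunctor (quotByIdealProj A I)
            (quotByIdealProj_surjective A I)).leftDerived n)).obj
          ((ModuleCat.restrictScalars (quotByIdealProj A I)).obj V))) ∧
    (∀ V : ModuleCat.{u} (QuotByIdeal A I), IsIso (counitMap A I V)) ∧
    (∃ ist : BoundedDerivedCategory (ModuleCat.{u} (QuotByIdeal A I)) ⥤
        BoundedDerivedCategory (ModuleCat.{u} A),
      Nonempty ((ist ⋙ boundedInclusion (ModuleCat.{u} A)) ≅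
        (boundedInclusion (ModuleCat.{u} (QuotByIdeal A I)) ⋙
          (ModuleCat.restrictScalars (quotByIdealProj A I)).mapDerivedCategory)) ∧
      ∃ (istar : BoundedDerivedCategory (ModuleCat.{u} A) ⥤
          BoundedDerivedCategory (ModuleCat.{u} (QuotByIdeal A I)))
        (_ : istar ⊣ ist),
        Nonempty ((ist ⋙ istar) ≅ 𝟭 _)) := by
  have hT := torBound_res A I htwosided hidem hproj
  have adj := quotAdj (quotByIdealProj A I) (quotByIdealProj_surjective A I)
  refine ⟨?_, counitMap_isIso A I, ?_⟩
  · intro V n hn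
    obtain ⟨n, rfl⟩ : ∃ m, n = m + 1 := ⟨n - 1, by lia⟩
    rw [link.{u} adj]
    intro J _
    exact hT V J (n + 1) (by lia)
  · obtain ⟨d, hd⟩ := hflat
    have := restrictScalars_full (quotByIdealProj A I) (quotByIdealProj_surjective A I)
    refine bounded_adjunction.{u, u} adj hT d ?_
    intro M J _ n hn
    obtain ⟨n, rfl⟩ : ∃ m, n = m + 1 := ⟨n - 1, by lia⟩
    exact (link.{u} adj M n).1 (hd M (n + 1) hn) J

end Final
end TorAdj

/-- **Left adjoint, ideal version.**  Let `A` be a ring, `I` a two-sided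
idempotent ideal which is projective as a left `A`-module, `B := A / I`, and
assume that `B` has finite flat dimension as a right `A`-module.  Then for
every `B`-module `V` one has `Tor^A_n(B, V) = 0` for `n ≥ 1` (the `Tor` groups
being computed as the left derived functors of `V ↦ B ⊗_A V = V/I·V`), the
natural map `B ⊗_A V → V` is an isomorphism and, equivalently, the functor
`i^* = B ⊗^L_A - : D^b(A) → D^b(B)` is left adjoint to the restriction functor
`i_*` with `i^* ∘ i_*` naturally isomorphic to the identity of `D^b(B)`. -/
theorem tor_vanishing_and_left_adjoint (A : Type u) [Ring A] (I : Ideal A)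
    (htwosided : ∀ x ∈ I, ∀ a : A, x * a ∈ I)
    (hidem : Submodule.span A {z : A | ∃ p ∈ I, ∃ q ∈ I, z = p * q} = I)
    (hproj : Module.Projective A ↥I)
    -- `B` has finite flat dimension as a right `A`-module:
    (hflat : ∃ d : ℕ, ∀ (V : ModuleCat.{u} A) (n : ℕ), d < n →
      Limits.IsZero
        ((((torQuotFunctor (quotByIdealProj A I)
          (quotByIdealProj_surjective A I)).leftDerived n)).obj V)) :
    -- (1) `Tor^A_n(B, V) = 0` for every `B`-module `V` and every `n ≥ 1`
    (∀ (V : ModuleCat.{u} (QuotByIdeal A I)) (n : ℕ), 1 ≤ n →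
      Limits.IsZero
        ((((torQuotFunctor (quotByIdealProj A I)
            (quotByIdealProj_surjective A I)).leftDerived n)).obj
          ((ModuleCat.restrictScalars (quotByIdealProj A I)).obj V))) ∧
    -- (2) the natural map `B ⊗_A V → V` is an isomorphism
    (∀ V : ModuleCat.{u} (QuotByIdeal A I), IsIso (counitMap A I V)) ∧
    -- (3) equivalently, `i^* = B ⊗^L_A -` is left adjoint to `i_*` on the
    -- bounded derived categories, with `i^* ∘ i_* ≅ id`
    (∃ ist : BoundedDerivedCategory (ModuleCat.{u} (QuotByIdeal A I)) ⥤
        BoundedDerivedCategory (ModuleCat.{u} A),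
      Nonempty ((ist ⋙ boundedInclusion (ModuleCat.{u} A)) ≅
        (boundedInclusion (ModuleCat.{u} (QuotByIdeal A I)) ⋙
          (ModuleCat.restrictScalars (quotByIdealProj A I)).mapDerivedCategory)) ∧
      ∃ (istar : BoundedDerivedCategory (ModuleCat.{u} A) ⥤
          BoundedDerivedCategory (ModuleCat.{u} (QuotByIdeal A I)))
        (_ : istar ⊣ ist),
        Nonempty ((ist ⋙ istar) ≅ 𝟭 _)) := by
  exact TorAdj.main_result A I htwosided hidem hproj hflat
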